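/- Let R be a basic left Harada algebra with modules P_{ij} := rad^{j-1}(e_{i1}R) as below, and let 1 ≤ i, u ≤ m with i ≠ u. Then Ext^1_R(P_{ik}/P_{il}, P_{uv}) = 0 for all 1 ≤ k < l ≤ n_i and all 1 ≤ v ≤ n_u, and Ext^1_R(P_{ik}/P_{il}, P_{us}/P_{ut}) = 0 for all 1 ≤ k < l ≤ n_i and all 1 ≤ s < t ≤ n_u. -/

import Mathlib

/-!
Common setup.  `K` is an algebraically closed field and `R` a finite-dimensional associative
unital `K`-algebra.  Right `R`-modules are formalized as modules over the opposite ring `Rᵐᵒᵖ`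
(so that `MulOpposite.op r • x = x * r`).
-/

open MulOpposite

/-- The right ideal `xR` of a ring `R`, as a submodule of `R` over `Rᵐᵒᵖ`. -/
def rightIdeal (R : Type) [Ring R] (x : R) : Submodule Rᵐᵒᵖ R :=
  Submodule.span Rᵐᵒᵖ {x}

/-- The Jacobson radical of a submodule `N` (the intersection of the maximal submodules of the
module `N`), viewed as a submodule of the ambient module.  Iterating this operation gives the
iterated radicals `rad^k`. -/
def radSub {A M : Type} [Ring A] [AddCommGroup M] [Module A M] (N : Submodule A M) :
    Submodule A M :=
  Submodule.map N.subtype (sInf {P : Submodule A ↥N | IsCoatom P})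

/-- A module is indecomposable if it is nonzero and admits no nontrivial direct sum
decomposition. -/
def IsIndecomposableMod (A M : Type) [Ring A] [AddCommGroup M] [Module A M] : Prop :=
  Nontrivial M ∧ ∀ N N' : Submodule A M, IsCompl N N' → N = ⊥ ∨ N' = ⊥

/-- A module has projective dimension at most one iff it admits a surjection from a projective
module with projective kernel. -/
def PdLeOne (A : Type) [Ring A] (M : Type) [AddCommGroup M] [Module A M] : Prop :=
  ∃ (P : ModuleCat.{0} A) (f : ↥P →ₗ[A] M),
    Module.Projective A ↥P ∧ Function.Surjective f ∧
      Module.Projective A ↥(LinearMap.ker f)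

/-- `Ext¹_A(M,N) = 0`, expressed by the splitting of every short exact sequence
`0 → N → E → M → 0`. -/
def Ext1Zero (A : Type) [Ring A] (M N : Type) [AddCommGroup M] [Module A M]
    [AddCommGroup N] [Module A N] : Prop :=
  ∀ (E : ModuleCat.{0} A) (i : N →ₗ[A] ↥E) (p : ↥E →ₗ[A] M),
    Function.Injective i → Function.Surjective p → LinearMap.range i = LinearMap.ker p →
    ∃ s : M →ₗ[A] ↥E, p.comp s = LinearMap.id

/-- `X ∈ add T` : `X` is a direct summand of a finite direct sum of copies of `T`. -/
def InAdd (A : Type) [Ring A] (T X : Type) [AddCommGroup T] [Module A T]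
    [AddCommGroup X] [Module A X] : Prop :=
  ∃ (k : ℕ) (f : X →ₗ[A] (Fin k → T)) (g : (Fin k → T) →ₗ[A] X),
    g.comp f = LinearMap.id

/-- `T` is a (finitely generated) tilting right `R`-module: projective dimension at most one,
no self-extensions, and there is a short exact sequence `0 → R → T₀ → T₁ → 0` with
`T₀, T₁ ∈ add T`. -/
def IsTiltingRight (R : Type) [Ring R] (T : Type) [AddCommGroup T] [Module Rᵐᵒᵖ T] : Prop :=
  Module.Finite Rᵐᵒᵖ T ∧ PdLeOne Rᵐᵒᵖ T ∧ Ext1Zero Rᵐᵒᵖ T T ∧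
    ∃ (T₀ T₁ : ModuleCat.{0} Rᵐᵒᵖ) (f : R →ₗ[Rᵐᵒᵖ] ↥T₀) (g : ↥T₀ →ₗ[Rᵐᵒᵖ] ↥T₁),
      InAdd Rᵐᵒᵖ T ↥T₀ ∧ InAdd Rᵐᵒᵖ T ↥T₁ ∧
        Function.Injective f ∧ Function.Surjective g ∧ LinearMap.range f = LinearMap.ker g

/-- `T` is basic: it is an (internal) direct sum of pairwise non-isomorphic indecomposable
submodules. -/
def IsBasicMod (A : Type) [Ring A] (T : Type) [AddCommGroup T] [Module A T] : Prop :=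
  ∃ (k : ℕ) (N : Fin k → Submodule A T),
    DirectSum.IsInternal N ∧ (∀ a, IsIndecomposableMod A ↥(N a)) ∧
      ∀ a b, a ≠ b → IsEmpty (↥(N a) ≃ₗ[A] ↥(N b))

/-- The setoid identifying isomorphic modules (among those with property `P`). -/
def isoSetoid (A : Type) [Ring A] (P : ModuleCat.{0} A → Prop) :
    Setoid {M : ModuleCat.{0} A // P M} where
  r M N := Nonempty (↥M.1 ≃ₗ[A] ↥N.1)
  iseqv := ⟨fun M => ⟨LinearEquiv.refl A ↥M.1⟩, fun ⟨e⟩ => ⟨e.symm⟩,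
    fun ⟨e⟩ ⟨f⟩ => ⟨e.trans f⟩⟩

/-- The data exhibiting a ring `R` as a basic left Harada algebra:
a complete set `{e i j}` of orthogonal primitive idempotents with pairwise non-isomorphic
right ideals `(e i j)R` (`R` is basic), such that each `(e i 0)R` is an injective right
module, and `(e i j)R ≅ rad ((e i (j-1))R)` for `j ≥ 1`.  (Indices are shifted by one from
the paper: the paper's `e_{ij}` is `e i (j-1)` here.) -/
structure HaradaData (R : Type) [Ring R] : Type where
  m : ℕ
  hm : 0 < m
  n : Fin m → ℕ
  hn : ∀ i, 0 < n i
  e : (i : Fin m) → Fin (n i) → R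
  idem : ∀ i j, IsIdempotentElem (e i j)
  orth : ∀ p q : Σ i : Fin m, Fin (n i), p ≠ q → e p.1 p.2 * e q.1 q.2 = 0
  sum_eq_one : ∑ p : Σ i : Fin m, Fin (n i), e p.1 p.2 = 1
  indec : ∀ i j, IsIndecomposableMod Rᵐᵒᵖ ↥(rightIdeal R (e i j))
  basic : ∀ p q : Σ i : Fin m, Fin (n i), p ≠ q →
    IsEmpty (↥(rightIdeal R (e p.1 p.2)) ≃ₗ[Rᵐᵒᵖ] ↥(rightIdeal R (e q.1 q.2)))
  inj : ∀ i, Module.Injective Rᵐᵒᵖ ↥(rightIdeal R (e i ⟨0, hn i⟩))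
  rad_iso : ∀ (i : Fin m) (j : Fin (n i)), 0 < j.val →
    Nonempty (↥(rightIdeal R (e i j)) ≃ₗ[Rᵐᵒᵖ]
      ↥(radSub (rightIdeal R (e i ⟨j.val - 1, Nat.lt_of_le_of_lt (Nat.sub_le j.val 1) j.isLt⟩))))

variable {R : Type} [Ring R]

/-- `H.P i j = rad^j ((e i 0)R)`; this is the paper's `P_{i,j+1} = rad^j (e_{i1}R)`,
a submodule of `R`. -/
def HaradaData.P (H : HaradaData R) (i : Fin H.m) (j : Fin (H.n i)) : Submodule Rᵐᵒᵖ R :=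
  radSub^[j.val] (rightIdeal R (H.e i ⟨0, H.hn i⟩))

/-- The quotient module `P_{ik}/P_{il}` (for `l ≥ k` we have `H.P i l ≤ H.P i k`). -/
abbrev HaradaData.Quot (H : HaradaData R) (i : Fin H.m) (k l : Fin (H.n i)) : Type :=
  ↥(H.P i k) ⧸ Submodule.comap (H.P i k).subtype (H.P i l)

/-- The last index (the paper's `n_i`) in `Fin (H.n i)`. -/
def HaradaData.last (H : HaradaData R) (i : Fin H.m) : Fin (H.n i) :=
  ⟨H.n i - 1, Nat.sub_lt (H.hn i) one_pos⟩

/-- The right ideal `I = ⊕_{i,j} rad^{n_i - j + 1}(e_{ij}R)` of the paper. -/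
def HaradaData.I (H : HaradaData R) : Submodule Rᵐᵒᵖ R :=
  ⨆ p : Σ i : Fin H.m, Fin (H.n i),
    radSub^[H.n p.1 - p.2.val] (rightIdeal R (H.e p.1 p.2))

/-- The submodule `T·I` of a right module `T`, for `I` a right ideal of `R`. -/
def smulSub (I : Submodule Rᵐᵒᵖ R) (T : Type) [AddCommGroup T] [Module Rᵐᵒᵖ T] :
    Submodule Rᵐᵒᵖ T :=
  Submodule.span Rᵐᵒᵖ {x : T | ∃ (t : T) (r : R), r ∈ I ∧ x = op r • t}

theorem hh_ker_bot {A M N : Type} [Ring A] [AddCommGroup M] [Module A M] [AddCommGroup N]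
    [Module A N] [Module.Projective A N] [Nontrivial N] (hM : IsIndecomposableMod A M)
    (f : M →ₗ[A] N) (hf : Function.Surjective f) : Function.Bijective f := by
  obtain ⟨g, hg⟩ := Module.projective_lifting_property f LinearMap.id hf
  have hg' : ∀ x, f (g x) = x := fun x => LinearMap.congr_fun hg x
  have hc : IsCompl (LinearMap.ker f) (LinearMap.range g) := by
    refine IsCompl.of_eq ?_ ?_
    · rw [eq_bot_iff]
      rintro x ⟨hx, y, rfl⟩
      have h1 : f (g y) = 0 := hx
      rw [hg'] at h1
      simp [h1]
    · rw [eq_top_iff]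
      intro x _
      have : x = (x - g (f x)) + g (f x) := by abel
      rw [this]
      refine Submodule.add_mem_sup ?_ ⟨f x, rfl⟩
      simp [hg']
  rcases hM.2 _ _ hc with h | h
  · exact ⟨LinearMap.ker_eq_bot.mp h, hf⟩
  · exfalso
    obtain ⟨y, hy⟩ := exists_ne (0 : N)
    have : g y ∈ LinearMap.range g := ⟨y, rfl⟩
    rw [h, Submodule.mem_bot] at this
    exact hy (by rw [← hg' y, this, map_zero])

theorem hh_local {A N : Type} [Ring A] [AddCommGroup N] [Module A N] [IsArtinian A N]
    [IsNoetherian A N] [Module.Projective A N] (hN : IsIndecomposableMod A N)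
    (L X : Submodule A N) (hL : L ≠ ⊤) (hX : IsCoatom X) : L ≤ X := by
  by_contra hLX
  have hsup : X ⊔ L = ⊤ := hX.2 _ (lt_of_le_of_ne le_sup_left (fun h => hLX (by
    rw [h]; exact le_sup_right)))
  have hsurj : Function.Surjective (X.mkQ.comp L.subtype) := by
    intro y
    obtain ⟨z, rfl⟩ := X.mkQ_surjective y
    have hz : z ∈ X ⊔ L := hsup ▸ Submodule.mem_top
    obtain ⟨x, hx, l, hl, rfl⟩ := Submodule.mem_sup.mp hz
    refine ⟨⟨l, hl⟩, ?_⟩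
    simp [hx]
  obtain ⟨h, hh⟩ := Module.projective_lifting_property _ X.mkQ hsurj
  let a : Module.End A N := L.subtype.comp h
  have ha : ∀ x, a x ∈ L := fun x => (h x).2
  have hb : ∀ x, (1 - a) x ∈ X := by
    intro x
    have h1 : X.mkQ (a x) = X.mkQ x := LinearMap.congr_fun hh x
    have h2 : X.mkQ ((1 - a) x) = 0 := by
      simp only [LinearMap.sub_apply, Module.End.one_apply, map_sub, h1, sub_self]
    exact (Submodule.Quotient.mk_eq_zero X).mp h2
  obtain ⟨n, hn⟩ := (a.eventually_isCompl_ker_pow_range_pow.and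
    (Filter.eventually_ge_atTop 1)).exists
  rcases hN.2 _ _ hn.1 with h1 | h1
  · have hs : Function.Surjective (a ^ n : Module.End A N) := by
      have := hn.1.sup_eq_top
      rw [h1, bot_sup_eq] at this
      exact LinearMap.range_eq_top.mp this
    apply hL
    rw [eq_top_iff]
    intro x _
    obtain ⟨y, rfl⟩ := hs x
    obtain ⟨k, rfl⟩ : ∃ k, n = k + 1 := ⟨n - 1, by omega⟩
    rw [pow_succ']
    exact ha _
  · have hnil : IsNilpotent a := ⟨n, LinearMap.range_eq_bot.mp h1⟩
    obtain ⟨w, hw⟩ := hnil.isUnit_one_sub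
    apply hX.1
    rw [eq_top_iff]
    intro x _
    have : x = (1 - a) ((↑w⁻¹ : Module.End A N) x) := by
      rw [← hw, ← Module.End.mul_apply, Units.mul_inv, Module.End.one_apply]
    rw [this]
    exact hb _

theorem hh_radSub_equiv {A M M' : Type} [Ring A] [AddCommGroup M] [Module A M]
    [AddCommGroup M'] [Module A M'] (N : Submodule A M) (N' : Submodule A M')
    (e : ↥N ≃ₗ[A] ↥N') : Nonempty (↥(radSub N) ≃ₗ[A] ↥(radSub N')) := by
  have h : Submodule.map (e : ↥N →ₗ[A] ↥N') (Module.jacobson A ↥N) = Module.jacobson A ↥N' :=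
    Module.map_jacobson_of_bijective e.bijective
  let e1 : ↥(radSub N) ≃ₗ[A] ↥(Module.jacobson A ↥N) :=
    (Submodule.equivSubtypeMap N (Module.jacobson A ↥N)).symm
  let e2 : ↥(radSub N') ≃ₗ[A] ↥(Module.jacobson A ↥N') :=
    (Submodule.equivSubtypeMap N' (Module.jacobson A ↥N')).symm
  exact ⟨e1.trans ((e.submoduleMap _).trans ((LinearEquiv.ofEq _ _ h).trans e2.symm))⟩

theorem hh_radSub_le {A M : Type} [Ring A] [AddCommGroup M] [Module A M]
    (N : Submodule A M) : radSub N ≤ N := Submodule.map_subtype_le _ _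

theorem hh_indec_equiv {A M N : Type} [Ring A] [AddCommGroup M] [Module A M] [AddCommGroup N]
    [Module A N] (e : M ≃ₗ[A] N) (hM : IsIndecomposableMod A M) : IsIndecomposableMod A N := by
  obtain ⟨h1, h2⟩ := hM
  refine ⟨e.symm.toEquiv.nontrivial, fun X Y hXY => ?_⟩
  have hc := hXY.map (Submodule.orderIsoMapComap e.symm)
  rcases h2 _ _ hc with h | h
  · left
    exact (map_eq_bot_iff (Submodule.orderIsoMapComap e.symm)).mp h
  · right
    exact (map_eq_bot_iff (Submodule.orderIsoMapComap e.symm)).mp h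

theorem hh_ext {A N X : Type} [Ring A] [AddCommGroup N] [Module A N] [AddCommGroup X]
    [Module A X] [Module.Projective A N] (B : Submodule A N)
    (hB : ∀ f : ↥B →ₗ[A] X, ∃ F : N →ₗ[A] X, ∀ b : ↥B, F b = f b) :
    Ext1Zero A (N ⧸ B) X := by
  intro E i p hi hp hip
  obtain ⟨q, hq⟩ := Module.projective_lifting_property p B.mkQ hp
  have hq' : ∀ x, p (q x) = B.mkQ x := fun x => LinearMap.congr_fun hq x
  have hpi : ∀ x, p (i x) = 0 := fun x => by
    have : i x ∈ LinearMap.ker p := hip ▸ ⟨x, rfl⟩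
    exact this
  have hr : ∀ b : ↥B, (q.comp B.subtype) b ∈ LinearMap.range i := by
    intro b
    rw [hip, LinearMap.mem_ker, LinearMap.comp_apply, hq']
    simp
  let f : ↥B →ₗ[A] X := (LinearEquiv.ofInjective i hi).symm.toLinearMap.comp
    ((q.comp B.subtype).codRestrict _ hr)
  have hf : ∀ b : ↥B, i (f b) = q b := fun b => by
    have := congrArg Subtype.val ((LinearEquiv.ofInjective i hi).apply_symm_apply
      ((q.comp B.subtype).codRestrict _ hr b))
    exact this
  obtain ⟨F, hF⟩ := hB f
  refine ⟨B.liftQ (q - i.comp F) ?_, ?_⟩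
  · intro b hb
    have h1 := hF ⟨b, hb⟩
    have h2 := hf ⟨b, hb⟩
    simp only at h1 h2
    rw [LinearMap.mem_ker, LinearMap.sub_apply, LinearMap.comp_apply, h1, h2, sub_self]
  · apply Submodule.linearMap_qext
    ext x
    simp [hq', hpi]

theorem hh_proj_self : Module.Projective Rᵐᵒᵖ R := by
  let e : Rᵐᵒᵖ ≃ₗ[Rᵐᵒᵖ] R :=
    { toFun := unop
      invFun := op
      left_inv := fun _ => rfl
      right_inv := fun _ => rfl
      map_add' := fun _ _ => rfl
      map_smul' := fun _ _ => rfl }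
  exact Module.Projective.of_equiv e

theorem hh_proj_ideal (x : R) (hx : IsIdempotentElem x) :
    Module.Projective Rᵐᵒᵖ ↥(rightIdeal R x) := by
  have := hh_proj_self (R := R)
  let f : R →ₗ[Rᵐᵒᵖ] R :=
    { toFun := fun r => x * r
      map_add' := fun _ _ => mul_add _ _ _
      map_smul' := fun a b => by
        simp [MulOpposite.smul_eq_mul_unop, mul_assoc] }
  have hf : ∀ r, f r ∈ rightIdeal R x := fun r =>
    Submodule.mem_span_singleton.mpr ⟨op r, rfl⟩
  refine Module.Projective.of_split (rightIdeal R x).subtype (f.codRestrict _ hf) ?_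
  ext ⟨y, hy⟩
  obtain ⟨a, rfl⟩ := Submodule.mem_span_singleton.mp hy
  show x * (x * unop a) = x * unop a
  rw [← mul_assoc, hx.eq]

theorem hh_P_equiv (H : HaradaData R) (u : Fin H.m) (j : ℕ) (hj : j < H.n u) :
    Nonempty (↥(rightIdeal R (H.e u ⟨j, hj⟩)) ≃ₗ[Rᵐᵒᵖ] ↥(H.P u ⟨j, hj⟩)) := by
  induction j with
  | zero => exact ⟨LinearEquiv.refl _ _⟩
  | succ j ih =>
    obtain ⟨e⟩ := ih (by omega)
    obtain ⟨e1⟩ := H.rad_iso u ⟨j + 1, hj⟩ (by simp)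
    obtain ⟨e2⟩ := hh_radSub_equiv _ _ e
    refine ⟨e1.trans (e2.trans (LinearEquiv.ofEq _ _ ?_))⟩
    simp only [HaradaData.P]
    rw [Function.iterate_succ_apply']

theorem hh_P_proj (H : HaradaData R) (u : Fin H.m) (j : Fin (H.n u)) :
    Module.Projective Rᵐᵒᵖ ↥(H.P u j) := by
  obtain ⟨e⟩ := hh_P_equiv H u j.1 j.2
  have := hh_proj_ideal _ (H.idem u j)
  exact Module.Projective.of_equiv e

theorem hh_P_anti (H : HaradaData R) (u : Fin H.m) (j k : Fin (H.n u)) (h : j ≤ k) :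
    H.P u k ≤ H.P u j := by
  have : ∀ d a : ℕ, radSub^[a + d] (rightIdeal R (H.e u ⟨0, H.hn u⟩)) ≤
      radSub^[a] (rightIdeal R (H.e u ⟨0, H.hn u⟩)) := by
    intro d a
    induction d with
    | zero => exact le_rfl
    | succ d ih =>
      rw [← Nat.add_assoc, Function.iterate_succ_apply']
      exact (hh_radSub_le _).trans ih
  have h2 := this (k.1 - j.1) j.1
  rwa [Nat.add_sub_cancel' h] at h2

theorem hh_range (H : HaradaData R) [IsArtinian Rᵐᵒᵖ R] [IsNoetherian Rᵐᵒᵖ R]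
    (i u : Fin H.m) (hiu : i ≠ u)
    (g : ↥(rightIdeal R (H.e i ⟨0, H.hn i⟩)) →ₗ[Rᵐᵒᵖ] R)
    (h0 : ∀ x, g x ∈ H.P u ⟨0, H.hn u⟩) (j : ℕ) (hj : j < H.n u) :
    ∀ x, g x ∈ H.P u ⟨j, hj⟩ := by
  induction j with
  | zero => exact h0
  | succ j ih =>
    have hj' : j < H.n u := by omega
    have ih := ih hj'
    obtain ⟨e⟩ := hh_P_equiv H u j hj'
    have hind := hh_indec_equiv e (H.indec u ⟨j, hj'⟩)
    have hpr := hh_P_proj H u ⟨j, hj'⟩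
    have hnt := hind.1
    have hne : LinearMap.range (g.codRestrict _ ih) ≠ ⊤ := by
      intro htop
      have hb := hh_ker_bot (H.indec i ⟨0, H.hn i⟩) _ (LinearMap.range_eq_top.mp htop)
      refine (H.basic ⟨i, ⟨0, H.hn i⟩⟩ ⟨u, ⟨j, hj'⟩⟩ ?_).false
        ((LinearEquiv.ofBijective _ hb).trans e.symm)
      intro h
      exact hiu (congrArg Sigma.fst h)
    intro x
    have hx : g.codRestrict _ ih x ∈
        sInf {P : Submodule Rᵐᵒᵖ ↥(H.P u ⟨j, hj'⟩) | IsCoatom P} := by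
      rw [Submodule.mem_sInf]
      intro X hX
      exact hh_local hind _ X hne hX ⟨x, rfl⟩
    have hx2 : g x ∈ radSub (H.P u ⟨j, hj'⟩) := ⟨_, hx, rfl⟩
    simp only [HaradaData.P] at hx2 ⊢
    rwa [Function.iterate_succ_apply']

theorem hh_extend (H : HaradaData R) [IsArtinian Rᵐᵒᵖ R] [IsNoetherian Rᵐᵒᵖ R]
    (i u : Fin H.m) (hiu : i ≠ u) (k : Fin (H.n i)) (v : Fin (H.n u))
    (B : Submodule Rᵐᵒᵖ ↥(H.P i k)) (f : ↥B →ₗ[Rᵐᵒᵖ] ↥(H.P u v)) :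
    ∃ F : ↥(H.P i k) →ₗ[Rᵐᵒᵖ] ↥(H.P u v), ∀ b : ↥B, F b = f b := by
  have hk : H.P i k ≤ rightIdeal R (H.e i ⟨0, H.hn i⟩) :=
    hh_P_anti H i ⟨0, H.hn i⟩ k (Nat.zero_le _)
  have hv : H.P u v ≤ rightIdeal R (H.e u ⟨0, H.hn u⟩) :=
    hh_P_anti H u ⟨0, H.hn u⟩ v (Nat.zero_le _)
  let f1 : ↥B →ₗ[Rᵐᵒᵖ] ↥(rightIdeal R (H.e i ⟨0, H.hn i⟩)) :=
    (Submodule.inclusion hk).comp B.subtype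
  let f2 : ↥B →ₗ[Rᵐᵒᵖ] ↥(rightIdeal R (H.e u ⟨0, H.hn u⟩)) := (Submodule.inclusion hv).comp f
  obtain ⟨g, hg⟩ := Module.Injective.out (self := H.inj u) (X := ↥B)
    (Y := ↥(rightIdeal R (H.e i ⟨0, H.hn i⟩))) f1
    ((Submodule.inclusion_injective hk).comp B.injective_subtype) f2
  have hr := hh_range H i u hiu ((Submodule.subtype _).comp g) (fun x => (g x).2) v.1 v.2
  refine ⟨(((Submodule.subtype _).comp g).codRestrict _ hr).comp (Submodule.inclusion hk), ?_⟩
  intro b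
  apply Subtype.ext
  have h1 : (g (f1 b)).val = (f2 b).val := by rw [hg b]
  exact h1

/-- Lemma 4.2.  For `i ≠ u` one has `Ext¹_R(P_{ik}/P_{il}, P_{uv}) = 0` and
`Ext¹_R(P_{ik}/P_{il}, P_{us}/P_{ut}) = 0`. -/
theorem statement13 (K R : Type) [Field K] [IsAlgClosed K] [Ring R] [Algebra K R]
    [FiniteDimensional K R] (H : HaradaData R) (i u : Fin H.m) (hiu : i ≠ u) :
    (∀ (k l : Fin (H.n i)) (v : Fin (H.n u)), k < l →
      Ext1Zero Rᵐᵒᵖ (H.Quot i k l) ↥(H.P u v)) ∧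
    (∀ (k l : Fin (H.n i)) (s t : Fin (H.n u)), k < l → s < t →
      Ext1Zero Rᵐᵒᵖ (H.Quot i k l) (H.Quot u s t)) := by
  have htower : IsScalarTower K Rᵐᵒᵖ R := ⟨fun a b c => by
    show c * unop (a • b) = a • (c * unop b)
    rw [MulOpposite.unop_smul, mul_smul_comm]⟩
  have hA : IsArtinian Rᵐᵒᵖ R := isArtinian_of_tower K inferInstance
  have hN : IsNoetherian Rᵐᵒᵖ R := isNoetherian_of_tower K inferInstance
  refine ⟨fun k l v hkl => ?_, fun k l s t hkl hst => ?_⟩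
  · have := hh_P_proj H i k
    exact hh_ext _ (fun f => hh_extend H i u hiu k v _ f)
  · have := hh_P_proj H i k
    have hl := hh_P_proj H i l
    refine hh_ext _ (fun f => ?_)
    have hB : Module.Projective Rᵐᵒᵖ ↥(Submodule.comap (H.P i k).subtype (H.P i l)) :=
      Module.Projective.of_equiv
        (Submodule.comapSubtypeEquivOfLe (hh_P_anti H i k l hkl.le)).symm
    obtain ⟨f', hf'⟩ := Module.projective_lifting_property
      (Submodule.comap (H.P u s).subtype (H.P u t)).mkQ f (Submodule.mkQ_surjective _)
    obtain ⟨F, hF⟩ := hh_extend H i u hiu k s _ f'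
    refine ⟨(Submodule.mkQ _).comp F, fun b => ?_⟩
    rw [LinearMap.comp_apply, hF, ← hf', LinearMap.comp_apply]
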